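/- arXiv:1501.07475 — 2 statements merged into one kernel-verified Lean document; each statement's English description precedes it below -/
import Mathlib

section
/- Assume n ≥ 3. Let S := { Θ_{a,b}(x_{c,d}) : a, b, c, d ∈ Fin n, a ≠ b, and Θ_{1,2}(x_{c,d}) = 0 } ⊆ R, and let τ := Σ_{k ∈ Fin n} x_{k,k} be the trace polynomial. Then for every pair (k,ℓ) ∈ Fin n × Fin n with (k,ℓ) ≠ (1,2), the variable x_{k,ℓ} lies in the ℂ-linear span of S ∪ {τ}. (Lemma 4.3 of the paper: on sl_n, where the trace relation holds, the span of { Θ_{a,b}(x_{c,d}) : Θ_{1,2}(x_{c,d}) = 0 } contains all linear monomials except x_{1,2}.) -/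
/-!
On a variable, `Θ_{a,b}(x_{c,d}) = [c = a] x_{b,d} - [d = b] x_{c,a}` (`Theta_X`), so `Θ_{1,2}`
kills `x_{c,d}` as soon as `c ≠ 1` and `d ≠ 2`. Applying `Θ_{a,b}` to such variables gives:

* `x_{k,l}` with `k ≠ l` and `l ≠ 2`, as `Θ_{c,k}(x_{c,l})` for any `c ∉ {1, k}`;
* `-x_{k,l}` with `k ≠ l` and `k ≠ 1`, as `Θ_{l,d}(x_{k,d})` for any `d ∉ {2, l}`;
* `x_{1,1} - x_{c,c}` with `c ≠ 1`, as `Θ_{c,1}(x_{c,1})`.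

The auxiliary indices exist because `n ≥ 3`. The first two families contain every off-diagonal
variable except `x_{1,2}`; the third, together with the trace, yields `n x_{1,1}` and hence every
diagonal variable.
-/

open MvPolynomial

/-- The polynomial ring in the `n²` matrix entries. -/
abbrev MatPoly (n : ℕ) := MvPolynomial (Fin n × Fin n) ℂ

/-- The fundamental vector field `Θ_{a,b}` of the conjugation action. -/
noncomputable def Theta {n : ℕ} (a b : Fin n) : Derivation ℂ (MatPoly n) (MatPoly n) :=
  ∑ k : Fin n,
    ((X (b, k) : MatPoly n) • (pderiv (a, k) : Derivation ℂ (MatPoly n) (MatPoly n))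
      - (X (k, a) : MatPoly n) • (pderiv (k, b) : Derivation ℂ (MatPoly n) (MatPoly n)))

theorem Theta_X {n : ℕ} (a b c d : Fin n) :
    Theta a b (X (c, d)) =
      (if c = a then (X (b, d) : MatPoly n) else 0) - (if d = b then X (c, a) else 0) := by
  classical
  have key : Theta a b (X (c, d)) = ∑ k : Fin n,
      ((X (b, k) : MatPoly n) * pderiv (a, k) (X (c, d))
        - X (k, a) * pderiv (k, b) (X (c, d))) := by
    rw [Theta, ← Derivation.coeFnAddMonoidHom_apply, map_sum, Finset.sum_apply]
    rfl
  rw [key, Finset.sum_sub_distrib]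
  congr 1
  · rw [Finset.sum_eq_single d]
    · by_cases h : c = a <;> simp [pderiv_X, h]
    · intro k _ hk
      simp [pderiv_X, hk.symm]
    · simp
  · rw [Finset.sum_eq_single c]
    · by_cases h : d = b <;> simp [pderiv_X, h]
    · intro k _ hk
      simp [pderiv_X, hk.symm]
    · simp

theorem exists_ne_ne {n : ℕ} (hn : 3 ≤ n) (i j : Fin n) : ∃ m : Fin n, m ≠ i ∧ m ≠ j :=
  Fin.exists_ne_and_ne_of_two_lt i j hn

theorem stmt_5 {n : ℕ} (hn : 3 ≤ n)
    (i1 i2 : Fin n) (h1 : (i1 : ℕ) = 0) (h2 : (i2 : ℕ) = 1)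
    (S : Set (MatPoly n))
    (hS : S = { p | ∃ a b c d : Fin n, a ≠ b ∧ Theta i1 i2 (X (c, d)) = 0 ∧
      p = Theta a b (X (c, d)) })
    (τ : MatPoly n) (hτ : τ = ∑ k : Fin n, X (k, k)) :
    ∀ k ℓ : Fin n, (k, ℓ) ≠ (i1, i2) →
      (X (k, ℓ) : MatPoly n) ∈ Submodule.span ℂ (S ∪ {τ}) := by
  classical
  have h12 : i1 ≠ i2 := fun h => by rw [h] at h1; omega
  have hmem : ∀ a b c d : Fin n, a ≠ b → c ≠ i1 → d ≠ i2 →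
      Theta a b (X (c, d)) ∈ Submodule.span ℂ (S ∪ {τ}) := by
    intro a b c d hab hc hd
    refine Submodule.subset_span (Or.inl ?_)
    rw [hS]
    refine ⟨a, b, c, d, hab, ?_, rfl⟩
    rw [Theta_X, if_neg hc, if_neg hd, sub_zero]
  have hoff : ∀ k l : Fin n, k ≠ l → (k, l) ≠ (i1, i2) →
      (X (k, l) : MatPoly n) ∈ Submodule.span ℂ (S ∪ {τ}) := by
    intro k l hkl hne
    by_cases hl : l = i2
    · have hk : k ≠ i1 := fun h => hne (by rw [h, hl])
      obtain ⟨d, hd2, hdl⟩ := exists_ne_ne hn i2 l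
      have h := hmem l d k d hdl.symm hk hd2
      rw [Theta_X, if_neg hkl, if_pos rfl, zero_sub] at h
      exact (Submodule.neg_mem_iff _).1 h
    · obtain ⟨c, hc1, hck⟩ := exists_ne_ne hn i1 k
      have h := hmem c k c l hck hc1 hl
      rwa [Theta_X, if_pos rfl, if_neg hkl.symm, sub_zero] at h
  have hdiff : ∀ c : Fin n,
      (X (i1, i1) - X (c, c) : MatPoly n) ∈ Submodule.span ℂ (S ∪ {τ}) := by
    intro c
    by_cases hc : c = i1
    · rw [hc, sub_self]
      exact Submodule.zero_mem _
    · have h := hmem c i1 c i1 hc hc h12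
      rwa [Theta_X, if_pos rfl, if_pos rfl] at h
  have hdiag1 : (X (i1, i1) : MatPoly n) ∈ Submodule.span ℂ (S ∪ {τ}) := by
    have hn0 : (n : ℂ) ≠ 0 := Nat.cast_ne_zero.2 (by omega)
    -- Summing the differences `x₁₁ - x_cc` over `c` gives `n x₁₁ - τ`.
    have hsum : (n : ℂ) • (X (i1, i1) : MatPoly n)
        = ∑ c : Fin n, (X (i1, i1) - X (c, c) : MatPoly n) + τ := by
      rw [hτ, Finset.sum_sub_distrib, sub_add_cancel, Finset.sum_const, Finset.card_univ,
        Fintype.card_fin, Nat.cast_smul_eq_nsmul]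
    refine (Submodule.smul_mem_iff _ hn0).1 ?_
    rw [hsum]
    exact Submodule.add_mem _ (Submodule.sum_mem _ fun c _ => hdiff c)
      (Submodule.subset_span (Or.inr rfl))
  intro k l hne
  by_cases hkl : k = l
  · subst hkl
    have h := Submodule.sub_mem _ hdiag1 (hdiff k)
    rwa [sub_sub_cancel] at h
  · exact hoff k l hkl hne
end

section
/- Let 1, 2 denote the first two indices of Fin n and define the weight w(c,d) := (if c = 1 then 1 else 0) − (if c = 2 then 1 else 0) − (if d = 1 then 1 else 0) + (if d = 2 then 1 else 0) ∈ ℤ. Then for every natural number m, the ℂ-dimension (finrank) of the subspace { p ∈ homogeneousSubmodule (Fin n × Fin n) ℂ m : Ξ_1(p) = 0 } equals the number of finitely supported exponent functions α : (Fin n × Fin n) →₀ ℕ with Σ_{(c,d)} α(c,d) = m and Σ_{(c,d)} (α(c,d) : ℤ) · w(c,d) = 0. (The dimension count underlying Lemma 5.6 of the paper: the kernel of Ξ_1 on homogeneous polynomials of degree m has dimension equal to the number of degree-m monomials of total weight zero.) -/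
/-!
The field `Ξ_1` is a combination of the Euler operators `x_{c,d} ∂/∂x_{c,d}`, hence diagonal in the
monomial basis: it multiplies the monomial with exponent `α` by the weight `∑ α(c,d) w(c,d)`
(`coeff_Xi`, `sum_weight`). As `ℂ` has characteristic zero, a polynomial is homogeneous of degree
`m` and killed by `Ξ_1` exactly when its support consists of exponents of degree `m` and weight
zero. Such polynomials form `restrictSupport`, which has the corresponding monomials as a basis.
-/

open MvPolynomial

/-- The hyperbolic vector field `Ξ_a`, where `a'` denotes the successor `a + 1`. -/
noncomputable def Xi {n : ℕ} (a a' : Fin n) : Derivation ℂ (MatPoly n) (MatPoly n) :=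
  ∑ k : Fin n,
    ((X (a, k) : MatPoly n) • (pderiv (a, k) : Derivation ℂ (MatPoly n) (MatPoly n))
      - (X (a', k) : MatPoly n) • (pderiv (a', k) : Derivation ℂ (MatPoly n) (MatPoly n))
      - (X (k, a) : MatPoly n) • (pderiv (k, a) : Derivation ℂ (MatPoly n) (MatPoly n))
      + (X (k, a') : MatPoly n) • (pderiv (k, a') : Derivation ℂ (MatPoly n) (MatPoly n)))

/-- The Euler operator `x_i ∂/∂x_i` is diagonal in the monomial basis. -/
lemma coeff_X_mul_pderiv {σ : Type*} (i : σ) (p : MvPolynomial σ ℂ) (α : σ →₀ ℕ) :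
    coeff α (X i * pderiv i p) = (α i : ℂ) * coeff α p := by
  classical
  induction p using MvPolynomial.induction_on' with
  | monomial u a =>
    rw [X_mul_pderiv_monomial, coeff_smul, coeff_monomial]
    split_ifs with h
    · subst h; simp
    · simp
  | add p q hp hq => simp only [map_add, mul_add, coeff_add, hp, hq]

lemma coeff_Xi {n : ℕ} (a a' : Fin n) (p : MatPoly n) (α : (Fin n × Fin n) →₀ ℕ) :
    coeff α (Xi a a' p) =
      ((∑ k : Fin n, ((α (a, k) : ℤ) - α (a', k) - α (k, a) + α (k, a')) : ℤ) : ℂ)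
        * coeff α p := by
  have h : Xi a a' p = ∑ k : Fin n, (X (a, k) * pderiv (a, k) p - X (a', k) * pderiv (a', k) p
      - X (k, a) * pderiv (k, a) p + X (k, a') * pderiv (k, a') p) := by
    rw [Xi, ← Derivation.coeFnAddMonoidHom_apply, map_sum, Finset.sum_apply]
    rfl
  rw [h, coeff_sum]
  push_cast
  rw [Finset.sum_mul]
  refine Finset.sum_congr rfl fun k _ => ?_
  simp only [coeff_add, coeff_sub, coeff_X_mul_pderiv]
  ring

/-- The weight of an exponent, with the indicator functions summed out. -/
lemma sum_weight {n : ℕ} (a a' : Fin n) (α : (Fin n × Fin n) →₀ ℕ) :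
    ∑ p : Fin n × Fin n, (α p : ℤ) * ((if p.1 = a then 1 else 0) - (if p.1 = a' then 1 else 0)
        - (if p.2 = a then 1 else 0) + (if p.2 = a' then 1 else 0))
      = ∑ k : Fin n, ((α (a, k) : ℤ) - α (a', k) - α (k, a) + α (k, a')) := by
  have row (b : Fin n) :
      ∑ p : Fin n × Fin n, (α p : ℤ) * (if p.1 = b then 1 else 0) = ∑ k, (α (b, k) : ℤ) := by
    rw [Fintype.sum_prod_type_right]
    simp
  have col (b : Fin n) :
      ∑ p : Fin n × Fin n, (α p : ℤ) * (if p.2 = b then 1 else 0) = ∑ k, (α (k, b) : ℤ) := by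
    rw [Fintype.sum_prod_type]
    simp
  simp only [mul_add, mul_sub, Finset.sum_add_distrib, Finset.sum_sub_distrib, row, col]

theorem stmt_17 {n : ℕ} (hn : 2 ≤ n)
    (i1 i2 : Fin n) (h1 : (i1 : ℕ) = 0) (h2 : (i2 : ℕ) = 1)
    (w : Fin n × Fin n → ℤ)
    (hw : ∀ p : Fin n × Fin n,
      w p = (if p.1 = i1 then 1 else 0) - (if p.1 = i2 then 1 else 0)
        - (if p.2 = i1 then 1 else 0) + (if p.2 = i2 then 1 else 0))
    (m : ℕ) :
    Module.finrank ℂ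
        ↥(homogeneousSubmodule (Fin n × Fin n) ℂ m ⊓ LinearMap.ker (Xi i1 i2).toLinearMap)
      = Set.ncard { α : (Fin n × Fin n) →₀ ℕ |
          (∑ p : Fin n × Fin n, α p) = m ∧
          (∑ p : Fin n × Fin n, (α p : ℤ) * w p) = 0 } := by
  set S : Set ((Fin n × Fin n) →₀ ℕ) := { α | (∑ p : Fin n × Fin n, α p) = m ∧
    (∑ p : Fin n × Fin n, (α p : ℤ) * w p) = 0 } with hS
  have key : homogeneousSubmodule (Fin n × Fin n) ℂ m ⊓ LinearMap.ker (Xi i1 i2).toLinearMap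
      = restrictSupport ℂ S := by
    ext p
    have hker : (Xi i1 i2) p = 0 ↔
        ∀ α, coeff α p ≠ 0 → ∑ q : Fin n × Fin n, (α q : ℤ) * w q = 0 := by
      rw [MvPolynomial.ext_iff]
      refine forall_congr' fun α => ?_
      rw [coeff_Xi, ← sum_weight, coeff_zero, mul_eq_zero, Int.cast_eq_zero]
      simp only [hw]
      tauto
    have hhom : p.IsHomogeneous m ↔ ∀ α, coeff α p ≠ 0 → ∑ q : Fin n × Fin n, α q = m := by
      refine forall_congr' fun α => ?_
      rw [← Finsupp.degree_eq_sum, Finsupp.degree_eq_weight_one (R := ℕ)]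
      rfl
    rw [Submodule.mem_inf, mem_homogeneousSubmodule, LinearMap.mem_ker, hhom,
      mem_restrictSupport_iff]
    change _ ∧ (Xi i1 i2) p = 0 ↔ _
    rw [hker]
    constructor
    · intro h α hα
      have hα' : coeff α p ≠ 0 := mem_support_iff.mp hα
      exact ⟨h.1 α hα', h.2 α hα'⟩
    · intro h
      exact ⟨fun α hα => (h (mem_support_iff.mpr hα)).1,
        fun α hα => (h (mem_support_iff.mpr hα)).2⟩
  rw [key, Module.finrank_eq_nat_card_basis (basisRestrictSupport ℂ S)]
  rfl
end
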